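/- arXiv:1609.07531 — 2 statements merged into one kernel-verified Lean document; each statement's English description precedes it below -/
import Mathlib

section
/- Let N be a matching in G such that every (A'∪B')-complete matching in G'_N has weight at most 0. Then N is a popular matching in G. -/
/-!
Given a competing matching `T`, a complete matching of `G'_N` of weight exactly `-Δ(N, T)` is
constructed; since its weight is at most `0`, this gives `Δ(N, T) ≥ 0`.

At every vertex `u`, a permutation attaining the minimum in `δ_u(N(u), T(u))` pairs the elements
(and nulls) of `N(u) ∖ T(u)` with those of `T(u) ∖ N(u)`. The clones of `u` carry the elements of
`N(u)` according to the realization `N'`, so this pairing tells which clone of `u` receives which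
element of `T(u) ∖ N(u)`, while clones carrying a common element keep it; there are enough empty
clones because `|T(u)| ≤ cap(u)`. The votes of the clones of `u` for their new contents against
the old ones then sum to `-δ_u(N(u), T(u))`, by antisymmetry of votes (`exists_refill`).

Joining clones `a_i` and `b_j` when `a_i` receives `b` and `b_j` receives `a` gives a matching on
clones. It lies in `G'_N`: an edge of `N ∩ T` is kept on both sides and so is realized by its copy
in `N'`. Its weight is the sum of the votes of all clones (`sum_votes`).
-/

/-!
Many-to-many matchings with two-sided preferences, votes, and popularity,
following "Popular Matchings in the Many-to-Many Setting".
-/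

/-- The vote of a vertex with rank function `r` (smaller rank = more preferred)
comparing two options, where `none` stands for `null` (ranked below everything). -/
def vote {β : Type*} [DecidableEq β] (r : β → ℕ) : Option β → Option β → ℤ
  | none, none => 0
  | some _, none => 1
  | none, some _ => -1
  | some x, some y => if x = y then 0 else if r x < r y then 1 else -1

/-- The common length `k` of the arrays compared in `δ_u(S₀,S₁)`:
after padding the smaller of `S₀, S₁` with nulls and removing common elements. -/
def kOf {β : Type*} [DecidableEq β] (S₀ S₁ : Finset β) : ℕ :=
  max S₀.card S₁.card - (S₀ ∩ S₁).card

/-- `S₀ ∖ S₁`, viewed as an array of `Option`s padded with `none` (null) to length `k`. -/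
noncomputable def padded {β : Type*} [DecidableEq β] (S₀ S₁ : Finset β) (k : ℕ) : List (Option β) :=
  ((S₀ \ S₁).toList.map some) ++ List.replicate (k - (S₀ \ S₁).card) none

/-- `δ_u(S₀,S₁)`: the minimum, over all permutations `σ` of `{1,…,k}`, of
`Σ_i vote_u(S'₀[i], S'₁[σ(i)])`. -/
noncomputable def deltaSet {β : Type*} [DecidableEq β] (r : β → ℕ) (S₀ S₁ : Finset β) : ℤ :=
  Finset.univ.inf' ⟨1, Finset.mem_univ 1⟩ fun σ : Equiv.Perm (Fin (kOf S₀ S₁)) =>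
    ∑ i : Fin (kOf S₀ S₁),
      vote r ((padded S₀ S₁ (kOf S₀ S₁)).getD (i : ℕ) none)
             ((padded S₁ S₀ (kOf S₀ S₁)).getD (σ i : ℕ) none)

/-- A bipartite instance `G = (A ∪ B, E)` with capacities `≥ 1` and strict
preferences of every vertex over its neighbors (given by injective-on-neighbors
rank functions; smaller rank = more preferred). -/
structure PrefInstance (α β : Type*) [Fintype α] [Fintype β] [DecidableEq α] [DecidableEq β] where
  E : Finset (α × β)
  capA : α → ℕ
  capB : β → ℕ
  rankA : α → β → ℕ
  rankB : β → α → ℕ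
  capA_pos : ∀ a, 1 ≤ capA a
  capB_pos : ∀ b, 1 ≤ capB b
  rankA_injOn : ∀ a, Set.InjOn (rankA a) {b | (a, b) ∈ E}
  rankB_injOn : ∀ b, Set.InjOn (rankB b) {a | (a, b) ∈ E}

namespace PrefInstance

variable {α β : Type*} [Fintype α] [Fintype β] [DecidableEq α] [DecidableEq β]

/-- `M(a)`: the set of `B`-vertices matched to `a` in `M`. -/
def rowSet (M : Finset (α × β)) (a : α) : Finset β :=
  Finset.univ.filter fun b => (a, b) ∈ M

/-- `M(b)`: the set of `A`-vertices matched to `b` in `M`. -/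
def colSet (M : Finset (α × β)) (b : β) : Finset α :=
  Finset.univ.filter fun a => (a, b) ∈ M

variable (I : PrefInstance α β)

/-- `M` is a matching in `G`: a subset of `E` respecting all capacities. -/
def IsMatching (M : Finset (α × β)) : Prop :=
  M ⊆ I.E ∧ (∀ a, (rowSet M a).card ≤ I.capA a) ∧ (∀ b, (colSet M b).card ≤ I.capB b)

/-- `Δ_a(M₀,M₁) = δ_a(M₀(a), M₁(a))` for `a ∈ A`. -/
noncomputable def DeltaA (M₀ M₁ : Finset (α × β)) (a : α) : ℤ :=
  deltaSet (I.rankA a) (rowSet M₀ a) (rowSet M₁ a)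

/-- `Δ_b(M₀,M₁) = δ_b(M₀(b), M₁(b))` for `b ∈ B`. -/
noncomputable def DeltaB (M₀ M₁ : Finset (α × β)) (b : β) : ℤ :=
  deltaSet (I.rankB b) (colSet M₀ b) (colSet M₁ b)

/-- `Δ(M₀,M₁) = Σ_{u ∈ A∪B} Δ_u(M₀,M₁)`. -/
noncomputable def Delta (M₀ M₁ : Finset (α × β)) : ℤ :=
  (∑ a, I.DeltaA M₀ M₁ a) + ∑ b, I.DeltaB M₀ M₁ b

/-- `M` is a popular matching: `Δ(M,T) ≥ 0` against every matching `T`. -/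
def Popular (M : Finset (α × β)) : Prop :=
  I.IsMatching M ∧ ∀ T, I.IsMatching T → 0 ≤ I.Delta M T

/-- `M` is a weakly popular matching: `Δ(T,M) ≤ 0` for every matching `T`. -/
def WeaklyPopular (M : Finset (α × β)) : Prop :=
  I.IsMatching M ∧ ∀ T, I.IsMatching T → I.Delta T M ≤ 0

/-- The edge `(a,b) ∈ E ∖ M` blocks `M`. -/
def Blocks (M : Finset (α × β)) (a : α) (b : β) : Prop :=
  (a, b) ∈ I.E ∧ (a, b) ∉ M ∧
  ((rowSet M a).card < I.capA a ∨ ∃ b' ∈ rowSet M a, I.rankA a b < I.rankA a b') ∧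
  ((colSet M b).card < I.capB b ∨ ∃ a' ∈ colSet M b, I.rankB b a < I.rankB b a')

/-- `M` is a pairwise-stable matching: no edge blocks it. -/
def Stable (M : Finset (α × β)) : Prop :=
  I.IsMatching M ∧ ∀ a b, ¬ I.Blocks M a b

end PrefInstance
namespace PrefInstance

variable {α β : Type*} [Fintype α] [Fintype β] [DecidableEq α] [DecidableEq β]
variable (I : PrefInstance α β)

/-- `A'`: the set of clones `a_i`, `1 ≤ i ≤ cap(a)`, of the vertices of `A`. -/
abbrev CloneA := (a : α) × Fin (I.capA a)

/-- `B'`: the set of clones `b_j`, `1 ≤ j ≤ cap(b)`, of the vertices of `B`. -/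
abbrev CloneB := (b : β) × Fin (I.capB b)

/-- `N'` is a realization of the matching `N` on the cloned vertex sets: a
(one-to-one) matching on `A' × B'` whose projection is a bijection onto `N`. -/
def IsRealization (N : Finset (α × β)) (N' : Finset (I.CloneA × I.CloneB)) : Prop :=
  (∀ e ∈ N', ∀ f ∈ N', e.1 = f.1 → e = f) ∧
  (∀ e ∈ N', ∀ f ∈ N', e.2 = f.2 → e = f) ∧
  N'.image (fun e => (e.1.1, e.2.1)) = N ∧
  N'.card = N.card

/-- The partner of `x ∈ A'` in a one-to-one matching `N'` on clones (`none` if unmatched,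
i.e. matched to the last resort `ℓ(x)` in `N*`). -/
noncomputable def partnerA (N' : Finset (I.CloneA × I.CloneB)) (x : I.CloneA) :
    Option I.CloneB :=
  if h : ∃ y, (x, y) ∈ N' then some h.choose else none

/-- The partner of `y ∈ B'` in a one-to-one matching `N'` on clones (`none` if unmatched). -/
noncomputable def partnerB (N' : Finset (I.CloneA × I.CloneB)) (y : I.CloneB) :
    Option I.CloneA :=
  if h : ∃ x, (x, y) ∈ N' then some h.choose else none

/-- `(x, y) ∈ A' × B'` is an edge of the graph `G'_N`: either the underlying pair is an
edge of `E ∖ N` (all clone copies present), or `(x,y)` is the unique copy in `N'` of an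
edge of `N`. -/
def GNEdge (N : Finset (α × β)) (N' : Finset (I.CloneA × I.CloneB))
    (x : I.CloneA) (y : I.CloneB) : Prop :=
  ((x.1, y.1) ∈ I.E ∧ (x.1, y.1) ∉ N) ∨ (x, y) ∈ N'

/-- The weight `wt_N(x,y) = vote_a(b, N*(a_i)) + vote_b(a, N*(b_j))` of an edge of `G'_N`
lying in `A' × B'` (a last-resort partner in `N*` is read as null). -/
noncomputable def wtE (N' : Finset (I.CloneA × I.CloneB))
    (x : I.CloneA) (y : I.CloneB) : ℤ :=
  vote (I.rankA x.1) (some y.1) (Option.map Sigma.fst (I.partnerA N' x)) +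
  vote (I.rankB y.1) (some x.1) (Option.map Sigma.fst (I.partnerB N' y))

/-- A one-to-one matching on the clone sets (each clone is in at most one edge).
Together with the implicit last-resort edges for unmatched clones, this represents
an `(A' ∪ B')`-complete matching in `G'_N`. -/
def IsCloneMatching (T' : Finset (I.CloneA × I.CloneB)) : Prop :=
  (∀ e ∈ T', ∀ f ∈ T', e.1 = f.1 → e = f) ∧ (∀ e ∈ T', ∀ f ∈ T', e.2 = f.2 → e = f)

/-- The weight `wt_N` of the `(A' ∪ B')`-complete matching represented by `T'`:
the sum of the weights of its `A' × B'` edges plus, for every clone left unmatched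
in `T'` (hence matched to its last resort), the weight `wt_N(v, ℓ(v))`, which is
`-1` if `v` is matched in `N'` and `0` otherwise. -/
noncomputable def wtTotal (N' T' : Finset (I.CloneA × I.CloneB)) : ℤ :=
  (∑ e ∈ T', I.wtE N' e.1 e.2) +
  (∑ x : I.CloneA,
    if ∀ y, (x, y) ∉ T' then (if ∃ y, (x, y) ∈ N' then (-1 : ℤ) else 0) else 0) +
  (∑ y : I.CloneB,
    if ∀ x, (x, y) ∉ T' then (if ∃ x, (x, y) ∈ N' then (-1 : ℤ) else 0) else 0)

/-- A 2-level witness for `N` (with realization `N'`): partitions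
`A' = A'₀ ∪ A'₁` and `B' = B'₀ ∪ B'₁` (encoded by level functions `lA, lB`, where
`true` means level 1) such that clones of `A'` unmatched in `N'` are in `A'₁`, clones
of `B'` unmatched in `N'` are in `B'₀`, `N' ⊆ (A'₀ × B'₀) ∪ (A'₁ × B'₁)`, every edge
of `G'_N` in `A'₁ × B'₀` has weight `-2`, and every edge of `G'_N` in
`(A'₀ × B'₀) ∪ (A'₁ × B'₁)` has weight `≤ 0`. -/
def TwoLevelWitness (N : Finset (α × β)) (N' : Finset (I.CloneA × I.CloneB))
    (lA : I.CloneA → Bool) (lB : I.CloneB → Bool) : Prop :=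
  (∀ x : I.CloneA, (∀ y, (x, y) ∉ N') → lA x = true) ∧
  (∀ y : I.CloneB, (∀ x, (x, y) ∉ N') → lB y = false) ∧
  (∀ e ∈ N', lA e.1 = lB e.2) ∧
  (∀ x y, I.GNEdge N N' x y → lA x = true → lB y = false → I.wtE N' x y = -2) ∧
  (∀ x y, I.GNEdge N N' x y → lA x = lB y → I.wtE N' x y ≤ 0)

end PrefInstance
/-! ### Slots listing a finite set -/

/-- `f : X → Option β` lists the finite set `S`: every element of `S` is the value of `f` at
exactly one slot, and all other slots hold `none` (null). -/
structure SlotList {X β : Type*} (f : X → Option β) (S : Finset β) : Prop where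
  mem : ∀ {i b}, f i = some b → b ∈ S
  ex : ∀ {b}, b ∈ S → ∃ i, f i = some b
  inj : ∀ {i j b}, f i = some b → f j = some b → i = j

theorem SlotList.card_none {X β : Type*} [Fintype X] [DecidableEq β] {f : X → Option β}
    {S : Finset β} (h : SlotList f S) :
    (Finset.univ.filter fun i => f i = none).card + S.card = Fintype.card X := by
  have h1 : (Finset.univ.filter fun i => ¬ f i = none).card = S.card := by
    refine Finset.card_bij (fun i hi => (f i).get (Option.isSome_iff_ne_none.2
      (Finset.mem_filter.1 hi).2)) ?_ ?_ ?_
    · intro i hi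
      exact h.mem (Option.some_get _).symm
    · intro i hi j hj hij
      have hi' := Option.isSome_iff_ne_none.2 (Finset.mem_filter.1 hi).2
      exact h.inj (Option.some_get hi').symm (by rw [hij, Option.some_get])
    · intro b hb
      obtain ⟨i, hi⟩ := h.ex hb
      exact ⟨i, by simp [hi], by simp [hi]⟩
  rw [← h1, Finset.card_filter_add_card_filter_not, Finset.card_univ]

/-- The padded array of `S ∖ S'` lists `S ∖ S'`, provided it is long enough. -/
theorem padded_slotList {β : Type*} [DecidableEq β] (S S' : Finset β) (k : ℕ)
    (hk : (S \ S').card ≤ k) :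
    SlotList (fun i : Fin k => (padded S S' k).getD (i : ℕ) none) (S \ S') := by
  have key : ∀ (n : ℕ) (b : β), (padded S S' k).getD n none = some b ↔
      (S \ S').toList[n]? = some b := by
    intro n b
    unfold padded
    rw [List.getD_eq_getElem?_getD, List.getElem?_append]
    split_ifs with h
    · simp only [List.length_map] at h
      simp [List.getElem?_eq_getElem h]
    · simp only [List.length_map, not_lt] at h
      simp only [List.getElem?_replicate, List.getElem?_eq_none h]
      split_ifs <;> simp
  refine ⟨?_, ?_, ?_⟩
  · intro i b h
    exact Finset.mem_toList.1 (List.mem_of_getElem? ((key _ _).1 h))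
  · intro b hb
    obtain ⟨n, hn⟩ := List.mem_iff_getElem?.1 (Finset.mem_toList.2 hb)
    have : n < (S \ S').toList.length := (List.getElem?_eq_some_iff.1 hn).1
    rw [Finset.length_toList] at this
    exact ⟨⟨n, this.trans_le hk⟩, (key _ _).2 hn⟩
  · intro i j b hi hj
    have hi := (key _ _).1 hi
    have hj := (key _ _).1 hj
    have hlt := (List.getElem?_eq_some_iff.1 hi).1
    exact Fin.ext ((List.getElem?_inj hlt (Finset.nodup_toList _)).1 (hi.trans hj.symm))

/-- A map `f` factors through `g` along an injection as soon as every fibre of `f` is at most as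
large as the corresponding fibre of `g`. -/
theorem exists_injective_comp_eq {X Y V : Type*} [Fintype X] [Fintype Y] [DecidableEq V]
    (f : X → V) (g : Y → V)
    (h : ∀ v, (Finset.univ.filter fun x => f x = v).card ≤
      (Finset.univ.filter fun y => g y = v).card) :
    ∃ c : X → Y, Function.Injective c ∧ ∀ x, g (c x) = f x := by
  have h' : ∀ v, Nonempty ({x // f x = v} ↪ {y // g y = v}) := by
    intro v
    refine Function.Embedding.nonempty_of_card_le ?_
    rw [Fintype.card_subtype, Fintype.card_subtype]
    exact h v
  have e := fun v => (h' v).some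
  have hg : ∀ x, g (e (f x) ⟨x, rfl⟩).1 = f x := fun x => (e (f x) ⟨x, rfl⟩).2
  refine ⟨fun x => (e (f x) ⟨x, rfl⟩).1, ?_, hg⟩
  have aux : ∀ v w (x : {x // f x = v}) (y : {x // f x = w}), v = w →
      (e v x).1 = (e w y).1 → x.1 = y.1 := by
    rintro v _ x y rfl hxy
    exact congrArg Subtype.val ((e v).injective (Subtype.ext hxy))
  intro x y hxy
  exact aux _ _ ⟨x, rfl⟩ ⟨y, rfl⟩ (by rw [← hg x, ← hg y]; exact congrArg g hxy) hxy

/-! ### Refilling the clones of one vertex -/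

theorem vote_self {β : Type*} [DecidableEq β] (r : β → ℕ) (x : Option β) : vote r x x = 0 := by
  cases x <;> simp [vote]

/-- Votes are antisymmetric; this is where strictness of the preferences is needed. -/
theorem vote_swap {β : Type*} [DecidableEq β] (r : β → ℕ) (x y : Option β)
    (h : ∀ a b, x = some a → y = some b → r a = r b → a = b) : vote r y x = - vote r x y := by
  cases x <;> cases y <;> simp [vote]
  rename_i a b
  have := h a b rfl rfl
  grind

/-- If the slots of a vertex `u` (its clones) currently list `S₀`, and `S₁` fits into these slots
as well, then the slots can be refilled by `S₁` so that common elements keep their slot and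
the slot-by-slot votes for the new contents add up to `-δ_u(S₀, S₁)`: a minimising permutation
dictates which new element replaces which old one. -/
theorem exists_refill {X β : Type*} [Fintype X] [DecidableEq β] (r : β → ℕ)
    (S₀ S₁ : Finset β) (hr : Set.InjOn r {b | b ∈ S₀ ∨ b ∈ S₁}) (hS₁ : S₁.card ≤ Fintype.card X)
    (p : X → Option β) (hp : SlotList p S₀) :
    ∃ q : X → Option β, SlotList q S₁ ∧ (∀ i b, p i = some b → b ∈ S₁ → q i = some b) ∧
      ∑ i, vote r (q i) (p i) = - deltaSet r S₀ S₁ := by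
  classical
  obtain ⟨σ, -, hσ⟩ := Finset.exists_mem_eq_inf' (s := Finset.univ) ⟨1, Finset.mem_univ 1⟩
    fun σ : Equiv.Perm (Fin (kOf S₀ S₁)) => ∑ i : Fin (kOf S₀ S₁),
      vote r ((padded S₀ S₁ (kOf S₀ S₁)).getD (i : ℕ) none)
             ((padded S₁ S₀ (kOf S₀ S₁)).getD (σ i : ℕ) none)
  change deltaSet r S₀ S₁ = _ at hσ
  have c0 := Finset.card_sdiff_add_card_inter S₀ S₁
  have c1 := Finset.card_sdiff_add_card_inter S₁ S₀
  rw [Finset.inter_comm] at c1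
  have hk : kOf S₀ S₁ = max S₀.card S₁.card - (S₀ ∩ S₁).card := rfl
  have hl0 := padded_slotList S₀ S₁ (kOf S₀ S₁) (by omega)
  have hl1 := padded_slotList S₁ S₀ (kOf S₀ S₁) (by omega)
  set l0 := fun i : Fin (kOf S₀ S₁) => (padded S₀ S₁ (kOf S₀ S₁)).getD (i : ℕ) none with hl0d
  set l1 := fun i : Fin (kOf S₀ S₁) => (padded S₁ S₀ (kOf S₀ S₁)).getD (i : ℕ) none with hl1d
  change _ = ∑ i, vote r (l0 i) (l1 (σ i)) at hσ
  -- Array positions embed into slots, compatibly with the current contents.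
  obtain ⟨c, hc, hpc⟩ : ∃ c : Fin (kOf S₀ S₁) → X, Function.Injective c ∧
      ∀ i, p (c i) = l0 i := by
    refine exists_injective_comp_eq l0 p ?_
    rintro (_ | b)
    · have := hp.card_none
      have := hl0.card_none
      rw [Fintype.card_fin] at this
      omega
    · by_cases hb : ∃ i, l0 i = some b
      · obtain ⟨i, hi⟩ := hb
        obtain ⟨j, hj⟩ := hp.ex (Finset.mem_sdiff.1 (hl0.mem hi)).1
        calc _ ≤ 1 := Finset.card_le_one.2 fun x hx y hy =>
              hl0.inj (Finset.mem_filter.1 hx).2 (Finset.mem_filter.1 hy).2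
          _ ≤ _ := Finset.card_pos.2 ⟨j, by simp [hj]⟩
      · push Not at hb
        simp [hb]
  have hon : ∀ i, Function.extend c (fun i => l1 (σ i)) p (c i) = l1 (σ i) :=
    fun i => hc.extend_apply _ _ i
  have hoff : ∀ j, (¬ ∃ i, c i = j) → Function.extend c (fun i => l1 (σ i)) p j = p j :=
    fun j hj => Function.extend_apply' _ _ j hj
  -- A slot outside the range of `c` is empty or holds a common element.
  have hoffmem : ∀ j b, (¬ ∃ i, c i = j) → p j = some b → b ∈ S₀ ∧ b ∈ S₁ := by
    intro j b hj hb
    refine ⟨hp.mem hb, ?_⟩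
    by_contra hb1
    obtain ⟨i, hi⟩ := hl0.ex (Finset.mem_sdiff.2 ⟨hp.mem hb, hb1⟩)
    exact hj ⟨i, hp.inj ((hpc i).trans hi) hb⟩
  have hkeep : ∀ j b, p j = some b → b ∈ S₁ →
      Function.extend c (fun i => l1 (σ i)) p j = some b := by
    intro j b hb hb1
    rw [hoff j, hb]
    rintro ⟨i, rfl⟩
    exact (Finset.mem_sdiff.1 (hl0.mem ((hpc i).symm.trans hb))).2 hb1
  refine ⟨Function.extend c (fun i => l1 (σ i)) p, ⟨?_, ?_, ?_⟩, hkeep, ?_⟩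
  · intro j b hb
    by_cases hj : ∃ i, c i = j
    · obtain ⟨i, rfl⟩ := hj
      rw [hon] at hb
      exact (Finset.mem_sdiff.1 (hl1.mem hb)).1
    · rw [hoff j hj] at hb
      exact (hoffmem j b hj hb).2
  · intro b hb
    by_cases hb0 : b ∈ S₀
    · obtain ⟨j, hj⟩ := hp.ex hb0
      exact ⟨j, hkeep j b hj hb⟩
    · obtain ⟨i, hi⟩ := hl1.ex (Finset.mem_sdiff.2 ⟨hb, hb0⟩)
      exact ⟨c (σ.symm i), by rw [hon, Equiv.apply_symm_apply]; exact hi⟩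
  · intro j j' b hj hj'
    by_cases h : ∃ i, c i = j <;> by_cases h' : ∃ i, c i = j'
    · obtain ⟨i, rfl⟩ := h
      obtain ⟨i', rfl⟩ := h'
      rw [hon] at hj hj'
      rw [σ.injective (hl1.inj hj hj')]
    · obtain ⟨i, rfl⟩ := h
      rw [hon] at hj
      rw [hoff j' h'] at hj'
      exact absurd (hoffmem j' b h' hj').1 (Finset.mem_sdiff.1 (hl1.mem hj)).2
    · obtain ⟨i, rfl⟩ := h'
      rw [hon] at hj'
      rw [hoff j h] at hj
      exact absurd (hoffmem j b h hj).1 (Finset.mem_sdiff.1 (hl1.mem hj')).2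
    · rw [hoff j h] at hj
      rw [hoff j' h'] at hj'
      exact hp.inj hj hj'
  · rw [hσ, ← Finset.sum_neg_distrib]
    have h1 : ∑ i, - vote r (l0 i) (l1 (σ i)) = ∑ j ∈ Finset.univ.image c,
        vote r (Function.extend c (fun i => l1 (σ i)) p j) (p j) := by
      rw [Finset.sum_image (fun _ _ _ _ h => hc h)]
      refine Finset.sum_congr rfl fun i _ => ?_
      rw [hon, hpc]
      refine (vote_swap r _ _ fun a b ha hb hab => ?_).symm
      exact hr (Or.inl (Finset.mem_sdiff.1 (hl0.mem ha)).1)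
        (Or.inr (Finset.mem_sdiff.1 (hl1.mem hb)).1) hab
    rw [h1]
    symm
    refine Finset.sum_subset (Finset.subset_univ _) fun j _ hj => ?_
    rw [hoff j (by simpa using hj), vote_self]

/-! ### Weight of a complete matching and popularity -/

/-- One side of the weight of a complete matching: the votes carried by the proper edges `T`,
together with those carried by the last-resort edges, are the votes of all clones. -/
theorem sum_votes {E X γ : Type*} [Fintype X] [DecidableEq X] [DecidableEq γ]
    (T : Finset E) (f : E → X) (hf : Set.InjOn f T) (r : X → γ → ℕ) (p q : X → Option γ)
    (hq : ∀ x, q x = none ↔ x ∉ T.image f) :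
    ∑ x, vote (r x) (q x) (p x) = ∑ e ∈ T, vote (r (f e)) (q (f e)) (p (f e)) +
      ∑ x, if x ∉ T.image f then (if p x ≠ none then (-1 : ℤ) else 0) else 0 := by
  rw [← Finset.sum_image (f := fun x => vote (r x) (q x) (p x)) hf,
    ← Finset.sum_filter_add_sum_filter_not Finset.univ (· ∈ T.image f)]
  congr 1
  · congr 1
    ext x
    simp
  · rw [Finset.sum_filter]
    refine Finset.sum_congr rfl fun x _ => ?_
    split_ifs with h h' <;> try rfl
    · rw [(hq x).2 h]
      obtain ⟨b, hb⟩ := Option.ne_none_iff_exists'.1 h'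
      rw [hb]; rfl
    · rw [(hq x).2 h, not_not.1 h']; rfl

open PrefInstance

/-- Let `N` be a matching in `G` (with a fixed realization `N'`) such
that every `(A' ∪ B')`-complete matching in `G'_N` has weight at most 0. Then `N` is a
popular matching in `G`. -/
theorem statement4 {α β : Type*} [Fintype α] [Fintype β] [DecidableEq α] [DecidableEq β]
    (I : PrefInstance α β) (N : Finset (α × β)) (hN : I.IsMatching N)
    (N' : Finset (I.CloneA × I.CloneB)) (hN' : I.IsRealization N N')
    (hwt : ∀ T' : Finset (I.CloneA × I.CloneB),
      I.IsCloneMatching T' → (∀ e ∈ T', I.GNEdge N N' e.1 e.2) → I.wtTotal N' T' ≤ 0) :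
    I.Popular N := by
  classical
  obtain ⟨hA, hB, himg, hcard⟩ := hN'
  have hinj : Set.InjOn (fun e : I.CloneA × I.CloneB => (e.1.1, e.2.1)) N' :=
    Finset.card_image_iff.1 (by rw [himg, hcard])
  have hproj : ∀ {x y}, (x, y) ∈ N' → (x.1, y.1) ∈ N := fun {x y} h => by
    rw [← himg]; exact Finset.mem_image.2 ⟨_, h, rfl⟩
  have hlift : ∀ {a b}, (a, b) ∈ N → ∃ x y, (x, y) ∈ N' ∧ x.1 = a ∧ y.1 = b := by
    intro a b h
    rw [← himg] at h
    obtain ⟨⟨x, y⟩, h1, h2⟩ := Finset.mem_image.1 h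
    exact ⟨x, y, h1, congrArg Prod.fst h2, congrArg Prod.snd h2⟩
  -- `pA`, `pB` give the contents of the clones under `N'`.
  set pA : I.CloneA → Option β := fun x => Option.map Sigma.fst (I.partnerA N' x) with hpA
  set pB : I.CloneB → Option α := fun y => Option.map Sigma.fst (I.partnerB N' y) with hpB
  have pA_of : ∀ {x y}, (x, y) ∈ N' → pA x = some y.1 := by
    intro x y h
    have hex : ∃ y, (x, y) ∈ N' := ⟨y, h⟩
    have : hex.choose = y := congrArg Prod.snd (hA _ hex.choose_spec _ h rfl)
    simp only [hpA, partnerA, dif_pos hex, this, Option.map_some]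
  have pB_of : ∀ {x y}, (x, y) ∈ N' → pB y = some x.1 := by
    intro x y h
    have hex : ∃ x, (x, y) ∈ N' := ⟨x, h⟩
    have : hex.choose = x := congrArg Prod.fst (hB _ hex.choose_spec _ h rfl)
    simp only [hpB, partnerB, dif_pos hex, this, Option.map_some]
  have pA_ne : ∀ {x}, pA x ≠ none ↔ ∃ y, (x, y) ∈ N' := by
    intro x
    simp only [hpA, partnerA]
    split_ifs with h <;> simp [h]
  have pB_ne : ∀ {y}, pB y ≠ none ↔ ∃ x, (x, y) ∈ N' := by
    intro y
    simp only [hpB, partnerB]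
    split_ifs with h <;> simp [h]
  have pA_some : ∀ {x b}, pA x = some b → ∃ y, (x, y) ∈ N' ∧ y.1 = b := by
    intro x b h
    obtain ⟨y, hy⟩ := pA_ne.1 (by rw [h]; simp)
    exact ⟨y, hy, Option.some_injective _ ((pA_of hy).symm.trans h)⟩
  have pB_some : ∀ {y a}, pB y = some a → ∃ x, (x, y) ∈ N' ∧ x.1 = a := by
    intro y a h
    obtain ⟨x, hx⟩ := pB_ne.1 (by rw [h]; simp)
    exact ⟨x, hx, Option.some_injective _ ((pB_of hx).symm.trans h)⟩
  have listA : ∀ a, SlotList (fun i => pA ⟨a, i⟩) (rowSet N a) := by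
    intro a
    refine ⟨?_, ?_, ?_⟩
    · intro i b h
      obtain ⟨y, hy, rfl⟩ := pA_some h
      simpa [rowSet] using hproj hy
    · intro b hb
      obtain ⟨⟨a', i⟩, y, h, rfl, rfl⟩ := hlift (show (a, b) ∈ N by simpa [rowSet] using hb)
      exact ⟨i, pA_of h⟩
    · intro i j b hi hj
      obtain ⟨y, hy, rfl⟩ := pA_some hi
      obtain ⟨y', hy', hyy⟩ := pA_some hj
      have := congrArg Prod.fst (hinj hy hy' (by simp [hyy]))
      simpa using this
  have listB : ∀ b, SlotList (fun i => pB ⟨b, i⟩) (colSet N b) := by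
    intro b
    refine ⟨?_, ?_, ?_⟩
    · intro i a h
      obtain ⟨x, hx, rfl⟩ := pB_some h
      simpa [colSet] using hproj hx
    · intro a ha
      obtain ⟨x, ⟨b', i⟩, h, rfl, rfl⟩ := hlift (show (a, b) ∈ N by simpa [colSet] using ha)
      exact ⟨i, pB_of h⟩
    · intro i j a hi hj
      obtain ⟨x, hx, rfl⟩ := pB_some hi
      obtain ⟨x', hx', hxx⟩ := pB_some hj
      have := congrArg Prod.snd (hinj hx hx' (by simp [hxx]))
      simpa using this
  refine ⟨hN, fun T hT => ?_⟩
  have refA := fun a => exists_refill (I.rankA a) (rowSet N a) (rowSet T a)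
    ((I.rankA_injOn a).mono (by
      rintro b (hb | hb)
      · exact hN.1 (by simpa [rowSet] using hb)
      · exact hT.1 (by simpa [rowSet] using hb)))
    (by rw [Fintype.card_fin]; exact hT.2.1 a) _ (listA a)
  have refB := fun b => exists_refill (I.rankB b) (colSet N b) (colSet T b)
    ((I.rankB_injOn b).mono (by
      rintro a (ha | ha)
      · exact hN.1 (by simpa [colSet] using ha)
      · exact hT.1 (by simpa [colSet] using ha)))
    (by rw [Fintype.card_fin]; exact hT.2.2 b) _ (listB b)
  choose qA lqA keepA sumA using refA
  choose qB lqB keepB sumB using refB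
  -- A pair of clones is joined exactly when each of the two lists the other's original.
  set T' : Finset (I.CloneA × I.CloneB) := Finset.univ.filter fun e =>
    qA e.1.1 e.1.2 = some e.2.1 ∧ qB e.2.1 e.2.2 = some e.1.1 with hT'
  have memT' : ∀ {x y}, (x, y) ∈ T' ↔ qA x.1 x.2 = some y.1 ∧ qB y.1 y.2 = some x.1 := by
    intro x y; simp [hT']
  have hinjA : ∀ e ∈ T', ∀ f ∈ T', e.1 = f.1 → e = f := by
    rintro ⟨x, ⟨b, j⟩⟩ he ⟨x', ⟨b', j'⟩⟩ hf h
    obtain rfl : x = x' := h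
    rw [memT'] at he hf
    obtain rfl : b = b' := Option.some_injective _ (he.1.symm.trans hf.1)
    obtain rfl : j = j' := (lqB b).inj he.2 hf.2
    rfl
  have hinjB : ∀ e ∈ T', ∀ f ∈ T', e.2 = f.2 → e = f := by
    rintro ⟨⟨a, i⟩, y⟩ he ⟨⟨a', i'⟩, y'⟩ hf h
    obtain rfl : y = y' := h
    rw [memT'] at he hf
    obtain rfl : a = a' := Option.some_injective _ (he.2.symm.trans hf.2)
    obtain rfl : i = i' := (lqA a).inj he.1 hf.1
    rfl
  have hedge : ∀ e ∈ T', I.GNEdge N N' e.1 e.2 := by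
    rintro ⟨⟨a, i⟩, ⟨b, j⟩⟩ he
    rw [memT'] at he
    have hab : (a, b) ∈ T := by simpa [rowSet] using (lqA a).mem he.1
    by_cases hn : (a, b) ∈ N
    · right
      obtain ⟨⟨a', i'⟩, ⟨b', j'⟩, h, rfl, rfl⟩ := hlift hn
      have h1 := keepA a' i' b' (pA_of h) (by simpa [rowSet] using hab)
      have h2 := keepB b' j' a' (pB_of h) (by simpa [colSet] using hab)
      have hi : i = i' := (lqA _).inj he.1 h1
      have hj : j = j' := (lqB _).inj he.2 h2
      rw [hi, hj]
      exact h
    · exact Or.inl ⟨hT.1 hab, hn⟩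
  have imA : ∀ x : I.CloneA, qA x.1 x.2 = none ↔ x ∉ T'.image Prod.fst := by
    rintro ⟨a, i⟩
    rw [← not_iff_not, not_not, ← ne_eq, Option.ne_none_iff_exists']
    constructor
    · rintro ⟨b, hb⟩
      have hab : (a, b) ∈ T := by simpa [rowSet] using (lqA a).mem hb
      obtain ⟨j, hj⟩ := (lqB b).ex (show a ∈ colSet T b by simpa [colSet] using hab)
      exact Finset.mem_image.2 ⟨(⟨a, i⟩, ⟨b, j⟩), memT'.2 ⟨hb, hj⟩, rfl⟩
    · intro h
      obtain ⟨⟨x, y⟩, he, hx⟩ := Finset.mem_image.1 h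
      subst hx
      exact ⟨_, (memT'.1 he).1⟩
  have imB : ∀ y : I.CloneB, qB y.1 y.2 = none ↔ y ∉ T'.image Prod.snd := by
    rintro ⟨b, j⟩
    rw [← not_iff_not, not_not, ← ne_eq, Option.ne_none_iff_exists']
    constructor
    · rintro ⟨a, ha⟩
      have hab : (a, b) ∈ T := by simpa [colSet] using (lqB b).mem ha
      obtain ⟨i, hi⟩ := (lqA a).ex (show b ∈ rowSet T a by simpa [rowSet] using hab)
      exact Finset.mem_image.2 ⟨(⟨a, i⟩, ⟨b, j⟩), memT'.2 ⟨hi, ha⟩, rfl⟩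
    · intro h
      obtain ⟨⟨x, y⟩, he, hy⟩ := Finset.mem_image.1 h
      subst hy
      exact ⟨_, (memT'.1 he).2⟩
  have sA := sum_votes T' Prod.fst (fun e he f hf h => hinjA e he f hf h)
    (fun x => I.rankA x.1) pA (fun x => qA x.1 x.2) imA
  have sB := sum_votes T' Prod.snd (fun e he f hf h => hinjB e he f hf h)
    (fun y => I.rankB y.1) pB (fun y => qB y.1 y.2) imB
  have hw : I.wtTotal N' T' = (∑ x : I.CloneA, vote (I.rankA x.1) (qA x.1 x.2) (pA x)) +
      ∑ y : I.CloneB, vote (I.rankB y.1) (qB y.1 y.2) (pB y) := by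
    rw [sA, sB]
    have e1 : ∑ e ∈ T', I.wtE N' e.1 e.2 =
        ∑ e ∈ T', vote (I.rankA e.1.1) (qA e.1.1 e.1.2) (pA e.1) +
        ∑ e ∈ T', vote (I.rankB e.2.1) (qB e.2.1 e.2.2) (pB e.2) := by
      rw [← Finset.sum_add_distrib]
      refine Finset.sum_congr rfl fun e he => ?_
      have := memT'.1 he
      rw [this.1, this.2]
      rfl
    have nA : ∀ x : I.CloneA, (∀ y, (x, y) ∉ T') ↔ x ∉ T'.image Prod.fst := by
      intro x; simp [Sigma.forall]
    have nB : ∀ y : I.CloneB, (∀ x, (x, y) ∉ T') ↔ y ∉ T'.image Prod.snd := by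
      intro y; simp [Sigma.forall]
    unfold wtTotal
    rw [e1]
    simp only [nA, nB, pA_ne, pB_ne]
    ring
  have hle := hwt T' ⟨hinjA, hinjB⟩ hedge
  rw [hw, Fintype.sum_sigma, Fintype.sum_sigma, Finset.sum_congr rfl fun a _ => sumA a,
    Finset.sum_congr rfl fun b _ => sumB b, Finset.sum_neg_distrib, Finset.sum_neg_distrib] at hle
  unfold Delta DeltaA DeltaB
  linarith
end

section
/- Every instance G = (A∪B, E) with capacities and strict preferences admits a popular matching. -/
/-! ### Choosing the best elements of a finite set -/

section Keep

variable {γ : Type*} (r : γ → ℕ) (c : ℕ) (S : Finset γ)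

/-- The elements of `S` that a vertex of capacity `c` keeps: those with fewer than `c` elements of
`S` strictly preferred to them. -/
def keep : Finset γ :=
  S.filter fun x => (S.filter fun y => r y < r x).card < c

variable {r c S}

theorem card_keep_le (hr : Set.InjOn r S) : (keep r c S).card ≤ c := by
  -- The number of better elements is injective on `S` and less than `c` on `keep r c S`.
  have hmono : ∀ x ∈ S, ∀ y ∈ S, r x < r y →
      (S.filter fun z => r z < r x).card < (S.filter fun z => r z < r y).card := by
    intro x hx y _ hxy
    apply Finset.card_lt_card
    refine ⟨fun z hz => ?_, fun h => ?_⟩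
    · simp only [Finset.mem_filter] at hz ⊢
      exact ⟨hz.1, hz.2.trans hxy⟩
    · have := h (Finset.mem_filter.2 ⟨hx, hxy⟩)
      simp at this
  calc (keep r c S).card ≤ (Finset.range c).card := by
        refine Finset.card_le_card_of_injOn (fun x => (S.filter fun z => r z < r x).card)
          ?_ ?_
        · intro x hx
          simp only [keep, Finset.coe_filter, Set.mem_ofPred_eq] at hx
          simpa using hx.2
        · intro x hx y hy hxy
          have hx' : x ∈ S := (Finset.mem_filter.1 hx).1
          have hy' : y ∈ S := (Finset.mem_filter.1 hy).1
          simp only at hxy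
          apply hr hx' hy'
          rcases lt_trichotomy (r x) (r y) with h | h | h
          · exact absurd hxy (hmono x hx' y hy' h).ne
          · exact h
          · exact absurd hxy (hmono y hy' x hx' h).ne'
    _ = c := Finset.card_range c

theorem lt_of_mem_keep {x y : γ} (hx : x ∈ S) (hxk : x ∉ keep r c S) (hy : y ∈ keep r c S) :
    r y < r x := by
  by_contra! h
  apply hxk
  refine Finset.mem_filter.2 ⟨hx, lt_of_le_of_lt (Finset.card_le_card ?_) (Finset.mem_filter.1 hy).2⟩
  intro z hz
  simp only [Finset.mem_filter] at hz ⊢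
  exact ⟨hz.1, hz.2.trans_le h⟩

theorem le_card_keep {x : γ} (hx : x ∈ S) (hxk : x ∉ keep r c S) : c ≤ (keep r c S).card := by
  classical
  -- Everything strictly better than a best rejected element is kept.
  obtain ⟨m, hm, hmin⟩ := Finset.exists_min_image (S.filter fun x => x ∉ keep r c S) r
    ⟨x, Finset.mem_filter.2 ⟨hx, hxk⟩⟩
  obtain ⟨hmS, hmk⟩ := Finset.mem_filter.1 hm
  have hc : c ≤ (S.filter fun y => r y < r m).card := by
    by_contra! h
    exact hmk (Finset.mem_filter.2 ⟨hmS, h⟩)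
  refine hc.trans (Finset.card_le_card fun z hz => ?_)
  obtain ⟨hzS, hzm⟩ := Finset.mem_filter.1 hz
  by_contra hzk
  exact absurd (hmin z (Finset.mem_filter.2 ⟨hzS, hzk⟩)) (not_le.2 hzm)

/-- Enlarging the set of offers can only turn kept elements into rejected ones. -/
theorem not_mem_keep_mono {T : Finset γ} (hST : S ⊆ T) {x : γ} (hx : x ∈ S)
    (hxk : x ∉ keep r c S) : x ∉ keep r c T := by
  intro h
  apply hxk
  refine Finset.mem_filter.2 ⟨hx, lt_of_le_of_lt (Finset.card_le_card ?_) (Finset.mem_filter.1 h).2⟩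
  exact Finset.filter_subset_filter _ hST

end Keep

/-! ### Existence of a stable matching -/

namespace PrefInstance

variable {α β : Type*} [Fintype α] [Fintype β] [DecidableEq α] [DecidableEq β]
variable (I : PrefInstance α β)

theorem mem_rowSet {M : Finset (α × β)} {a : α} {b : β} : b ∈ rowSet M a ↔ (a, b) ∈ M := by
  simp [rowSet]

theorem mem_colSet {M : Finset (α × β)} {a : α} {b : β} : a ∈ colSet M b ↔ (a, b) ∈ M := by
  simp [colSet]

/-- The edges rejected by the vertices of `A` when offered the edges in `X`. -/
def rejA (X : Finset (α × β)) : Finset (α × β) :=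
  X.filter fun e => e.2 ∉ keep (I.rankA e.1) (I.capA e.1) (rowSet X e.1)

/-- The edges rejected by the vertices of `B` when offered the edges in `X`. -/
def rejB (X : Finset (α × β)) : Finset (α × β) :=
  X.filter fun e => e.1 ∉ keep (I.rankB e.2) (I.capB e.2) (colSet X e.2)

theorem rejA_mono : Monotone I.rejA := by
  intro X Y h e he
  obtain ⟨heX, hek⟩ := Finset.mem_filter.1 he
  refine Finset.mem_filter.2 ⟨h heX, not_mem_keep_mono (fun b hb => ?_) (mem_rowSet.2 heX) hek⟩
  exact mem_rowSet.2 (h (mem_rowSet.1 hb))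

theorem rejB_mono : Monotone I.rejB := by
  intro X Y h e he
  obtain ⟨heX, hek⟩ := Finset.mem_filter.1 he
  refine Finset.mem_filter.2 ⟨h heX, not_mem_keep_mono (fun b hb => ?_) (mem_colSet.2 heX) hek⟩
  exact mem_colSet.2 (h (mem_colSet.1 hb))

theorem exists_stable : ∃ M, I.Stable M := by
  classical
  obtain ⟨X, hX⟩ : ∃ X, I.E \ I.rejB (I.E \ I.rejA X) = X := by
    -- Knaster–Tarski is applied in the complete lattice `Set (α × β)`.
    let F : Set (α × β) →o Set (α × β) :=
      { toFun := fun X => ↑(I.E \ I.rejB (I.E \ I.rejA X.toFinset))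
        monotone' := fun X Y h => Finset.coe_subset.2 <|
          Finset.sdiff_subset_sdiff subset_rfl <| I.rejB_mono <|
          Finset.sdiff_subset_sdiff subset_rfl <| I.rejA_mono <| Set.toFinset_mono h }
    refine ⟨(OrderHom.lfp F).toFinset, ?_⟩
    have h : F (OrderHom.lfp F) = OrderHom.lfp F := OrderHom.map_lfp F
    apply Finset.coe_injective
    rw [Set.coe_toFinset]
    exact h
  obtain ⟨Y, hY⟩ : ∃ Y, Y = I.E \ I.rejA X := ⟨_, rfl⟩
  rw [← hY] at hX
  have hXE : X ⊆ I.E := hX ▸ Finset.sdiff_subset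
  have hYE : Y ⊆ I.E := hY ▸ Finset.sdiff_subset
  have hAX : I.rejA X ⊆ X := Finset.filter_subset _ _
  have hBY : I.rejB Y ⊆ Y := Finset.filter_subset _ _
  have hmX : ∀ e, e ∈ X ↔ e ∈ I.E ∧ e ∉ I.rejB Y := fun e => by
    rw [← Finset.mem_sdiff, hX]
  have hmY : ∀ e, e ∈ Y ↔ e ∈ I.E ∧ e ∉ I.rejA X := fun e => by
    rw [← Finset.mem_sdiff, hY]
  have hrow : ∀ a, rowSet (X ∩ Y) a = keep (I.rankA a) (I.capA a) (rowSet X a) := by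
    intro a
    ext b
    have h1 := hmY (a, b)
    have h2 : (a, b) ∈ I.rejA X ↔
      (a, b) ∈ X ∧ b ∉ keep (I.rankA a) (I.capA a) (rowSet X a) := Finset.mem_filter
    have h3 : b ∈ keep (I.rankA a) (I.capA a) (rowSet X a) → b ∈ rowSet X a :=
      fun h => (Finset.mem_filter.1 h).1
    have h4 := @hXE (a, b)
    rw [mem_rowSet] at h3 ⊢
    rw [Finset.mem_inter]
    tauto
  have hcol : ∀ b, colSet (X ∩ Y) b = keep (I.rankB b) (I.capB b) (colSet Y b) := by
    intro b
    ext a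
    have h1 := hmX (a, b)
    have h2 : (a, b) ∈ I.rejB Y ↔
      (a, b) ∈ Y ∧ a ∉ keep (I.rankB b) (I.capB b) (colSet Y b) := Finset.mem_filter
    have h3 : a ∈ keep (I.rankB b) (I.capB b) (colSet Y b) → a ∈ colSet Y b :=
      fun h => (Finset.mem_filter.1 h).1
    have h4 := @hYE (a, b)
    rw [mem_colSet] at h3 ⊢
    rw [Finset.mem_inter]
    tauto
  refine ⟨X ∩ Y, ⟨fun e he => hXE (Finset.mem_inter.1 he).1, fun a => ?_, fun b => ?_⟩, ?_⟩
  · rw [hrow]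
    exact card_keep_le ((I.rankA_injOn a).mono fun b hb => hXE (mem_rowSet.1 hb))
  · rw [hcol]
    exact card_keep_le ((I.rankB_injOn b).mono fun a ha => hYE (mem_colSet.1 ha))
  · rintro a b ⟨hE, hM, hA, hB⟩
    by_cases hbX : (a, b) ∈ X
    · -- The edge was offered to `a` and rejected.
      have hbk : b ∉ keep (I.rankA a) (I.capA a) (rowSet X a) := by
        rwa [← hrow, mem_rowSet]
      have hbX' := mem_rowSet.2 hbX
      rw [hrow] at hA
      rcases hA with h | ⟨b', hb', h⟩
      · exact absurd (le_card_keep hbX' hbk) (not_le.2 h)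
      · exact lt_asymm h (lt_of_mem_keep hbX' hbk hb')
    · -- The edge was offered to `b` and rejected.
      have haY : (a, b) ∈ Y := (hmY _).2 ⟨hE, fun h => hbX (hAX h)⟩
      have hak : a ∉ keep (I.rankB b) (I.capB b) (colSet Y b) := by
        rwa [← hcol, mem_colSet]
      have haY' := mem_colSet.2 haY
      rw [hcol] at hB
      rcases hB with h | ⟨a', ha', h⟩
      · exact absurd (le_card_keep haY' hak) (not_le.2 h)
      · exact lt_asymm h (lt_of_mem_keep haY' hak ha')

end PrefInstance

/-! ### Lower bound on the vote of one vertex -/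

section Votes

variable {γ : Type*} [DecidableEq γ]

/-- `-1` if `y` is attractive to a vertex of capacity `c` and current partners `S` (spare capacity,
or `y` preferred to some partner), and `1` otherwise. -/
def appeal (r : γ → ℕ) (c : ℕ) (S : Finset γ) (y : γ) : ℤ :=
  if S.card < c ∨ ∃ x ∈ S, r y < r x then -1 else 1

theorem card_sdiff_le_kOf (S₀ S₁ : Finset γ) : (S₀ \ S₁).card ≤ kOf S₀ S₁ := by
  have := Finset.card_sdiff_add_card_inter S₀ S₁
  unfold kOf
  omega

theorem length_padded {S₀ S₁ : Finset γ} {k : ℕ} (h : (S₀ \ S₁).card ≤ k) :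
    (padded S₀ S₁ k).length = k := by
  simp [padded]
  omega

theorem kOf_comm (S₀ S₁ : Finset γ) : kOf S₀ S₁ = kOf S₁ S₀ := by
  simp [kOf, max_comm, Finset.inter_comm]

theorem mem_padded_some {S₀ S₁ : Finset γ} {k : ℕ} {x : γ} :
    some x ∈ padded S₀ S₁ k ↔ x ∈ S₀ ∧ x ∉ S₁ := by
  simp [padded]

/-- A null entry on the side of `S₀` shows that `S₀` is the smaller set. -/
theorem card_lt_of_none_mem {S₀ S₁ : Finset γ} (h : none ∈ padded S₀ S₁ (kOf S₀ S₁)) :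
    S₀.card < S₁.card := by
  have := Finset.card_sdiff_add_card_inter S₀ S₁
  simp [padded, kOf] at h
  omega

theorem sum_padded (f : γ → ℤ) (S₀ S₁ : Finset γ) {k : ℕ} (h : (S₀ \ S₁).card ≤ k) :
    ∑ i : Fin k, ((padded S₀ S₁ k).getD (i : ℕ) none).elim 0 f = ∑ x ∈ S₀ \ S₁, f x := by
  have hl := length_padded h
  have h1 : ∑ i : Fin k, ((padded S₀ S₁ k).getD (i : ℕ) none).elim 0 f =
      ((padded S₀ S₁ k).map fun o => o.elim 0 f).sum := by
    rw [← Fin.sum_univ_getElem]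
    refine Fintype.sum_equiv (finCongr (by simp [hl])) _ _ fun i => ?_
    have : (i : ℕ) < (padded S₀ S₁ k).length := by rw [hl]; exact i.2
    simp [this]
  rw [h1]
  simp [padded, Function.comp_def]

theorem vote_ge_appeal {r : γ → ℕ} {c : ℕ} {S₀ S₁ : Finset γ} (hc : S₁.card ≤ c)
    {N : Set γ} (hr : Set.InjOn r N) (h₀ : ∀ x ∈ S₀, x ∈ N) (h₁ : ∀ x ∈ S₁, x ∈ N)
    {o p : Option γ} (ho : o ∈ padded S₀ S₁ (kOf S₀ S₁)) (hp : p ∈ padded S₁ S₀ (kOf S₀ S₁)) :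
    p.elim 0 (appeal r c S₀) ≤ vote r o p := by
  rcases p with _ | y
  · rcases o with _ | x <;> simp [vote]
  rw [mem_padded_some] at hp
  rcases o with _ | x
  · have := card_lt_of_none_mem ho
    simp [vote, appeal, this.trans_le hc]
  · rw [mem_padded_some] at ho
    have hne : x ≠ y := fun h => hp.2 (h ▸ ho.1)
    have hrne : r x ≠ r y := fun h => hne (hr (h₀ x ho.1) (h₁ y hp.1) h)
    by_cases hlt : r x < r y
    · simp only [vote, hne, hlt, if_true, if_false, Option.elim, appeal]
      split_ifs <;> simp
    · have hex : ∃ x ∈ S₀, r y < r x := ⟨x, ho.1, by omega⟩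
      simp [vote, hne, hlt, appeal, hex]

/-- Whichever pairing is used, `S₀` loses at most one vote for each attractive element of
`S₁ \ S₀` and wins a vote for each unattractive one. -/
theorem sum_appeal_le_deltaSet {r : γ → ℕ} {c : ℕ} {S₀ S₁ : Finset γ} (hc : S₁.card ≤ c)
    {N : Set γ} (hr : Set.InjOn r N) (h₀ : ∀ x ∈ S₀, x ∈ N) (h₁ : ∀ x ∈ S₁, x ∈ N) :
    ∑ y ∈ S₁ \ S₀, appeal r c S₀ y ≤ deltaSet r S₀ S₁ := by
  refine Finset.le_inf' _ _ fun σ _ => ?_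
  have hk₀ := card_sdiff_le_kOf S₀ S₁
  have hk₁ : (S₁ \ S₀).card ≤ kOf S₀ S₁ := kOf_comm S₁ S₀ ▸ card_sdiff_le_kOf S₁ S₀
  rw [← sum_padded _ _ _ hk₁, ← Equiv.sum_comp σ]
  refine Finset.sum_le_sum fun i _ => vote_ge_appeal hc hr h₀ h₁ ?_ ?_
  · rw [List.getD_eq_getElem _ _ (by rw [length_padded hk₀]; exact i.2)]
    exact List.getElem_mem _
  · rw [List.getD_eq_getElem _ _ (by rw [length_padded hk₁]; exact (σ i).2)]
    exact List.getElem_mem _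

end Votes

/-! ### Stable matchings are popular -/

namespace PrefInstance

variable {α β : Type*} [Fintype α] [Fintype β] [DecidableEq α] [DecidableEq β]
variable {I : PrefInstance α β}

theorem Stable.popular {M : Finset (α × β)} (hM : I.Stable M) : I.Popular M := by
  obtain ⟨⟨hME, hMA, hMB⟩, hst⟩ := hM
  refine ⟨⟨hME, hMA, hMB⟩, fun T ⟨hTE, hTA, hTB⟩ => ?_⟩
  have hA : ∀ a, ∑ b ∈ rowSet T a \ rowSet M a, appeal (I.rankA a) (I.capA a) (rowSet M a) b ≤
      I.DeltaA M T a := fun a =>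
    sum_appeal_le_deltaSet (hTA a) (I.rankA_injOn a)
      (fun b hb => hME (mem_rowSet.1 hb)) (fun b hb => hTE (mem_rowSet.1 hb))
  have hB : ∀ b, ∑ a ∈ colSet T b \ colSet M b, appeal (I.rankB b) (I.capB b) (colSet M b) a ≤
      I.DeltaB M T b := fun b =>
    sum_appeal_le_deltaSet (hTB b) (I.rankB_injOn b)
      (fun a ha => hME (mem_colSet.1 ha)) (fun a ha => hTE (mem_colSet.1 ha))
  have hsA : ∑ a, ∑ b ∈ rowSet T a \ rowSet M a, appeal (I.rankA a) (I.capA a) (rowSet M a) b =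
      ∑ e ∈ T \ M, appeal (I.rankA e.1) (I.capA e.1) (rowSet M e.1) e.2 :=
    (Finset.sum_finset_product (T \ M) Finset.univ (fun a => rowSet T a \ rowSet M a)
      (by simp [mem_rowSet])
      (f := fun e => appeal (I.rankA e.1) (I.capA e.1) (rowSet M e.1) e.2)).symm
  have hsB : ∑ b, ∑ a ∈ colSet T b \ colSet M b, appeal (I.rankB b) (I.capB b) (colSet M b) a =
      ∑ e ∈ T \ M, appeal (I.rankB e.2) (I.capB e.2) (colSet M e.2) e.1 :=
    (Finset.sum_finset_product_right (T \ M) Finset.univ (fun b => colSet T b \ colSet M b)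
      (by simp [mem_colSet])
      (f := fun e => appeal (I.rankB e.2) (I.capB e.2) (colSet M e.2) e.1)).symm
  have hedge : 0 ≤ ∑ e ∈ T \ M, (appeal (I.rankA e.1) (I.capA e.1) (rowSet M e.1) e.2 +
      appeal (I.rankB e.2) (I.capB e.2) (colSet M e.2) e.1) := by
    refine Finset.sum_nonneg fun e he => ?_
    obtain ⟨heT, heM⟩ := Finset.mem_sdiff.1 he
    have hnb := hst e.1 e.2
    unfold appeal
    split_ifs with h1 h2 h2
    · exact absurd ⟨hTE heT, heM, h1, h2⟩ hnb
    all_goals norm_num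
  rw [Finset.sum_add_distrib, ← hsA, ← hsB] at hedge
  exact hedge.trans (add_le_add (Finset.sum_le_sum fun a _ => hA a)
    (Finset.sum_le_sum fun b _ => hB b))

end PrefInstance

/-- Every instance `G = (A ∪ B, E)` with capacities and strict
preferences admits a popular matching. -/
theorem statement6 {α β : Type*} [Fintype α] [Fintype β] [DecidableEq α] [DecidableEq β]
    (I : PrefInstance α β) :
    ∃ M : Finset (α × β), I.Popular M := by
  obtain ⟨M, hM⟩ := I.exists_stable
  exact ⟨M, hM.popular⟩
end
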